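/- Let 𝓗 be a Hopf algebra over k with antipode S, δ: 𝓗 → k an algebra map, and S̃_δ = δ*S the twisted antipode; assume S̃_δ² = id. Let R be any k-algebra. Then H = R ⊗ 𝓗 ⊗ R^op with α(a) = a⊗1⊗1, β(a) = 1⊗1⊗a, Δ(a⊗h⊗b) = (a⊗h⁽¹⁾⊗1) ⊗_R (1⊗h⁽²⁾⊗b), ε(a⊗h⊗b) = ε(h)ab, and T(a⊗h⊗b) = b ⊗ S̃_δ(h) ⊗ a, is a para-Hopf algebroid over R. -/

import Mathlib

open TensorProduct

noncomputable section

/-- The data of a (pre-)bialgebroid: total algebra `H`, base algebra `R`,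
source map `α` (algebra map), target map `β` (anti-algebra map), a linear lift
`Δ : H → H ⊗[k] H` of the coproduct, and the counit `ε`. -/
structure PreBialgebroid (k H R : Type) [Field k] [Ring H] [Algebra k H]
    [Ring R] [Algebra k R] where
  α : R →ₐ[k] H
  β : R →ₗ[k] H
  β_one : β 1 = 1
  β_mul : ∀ a b : R, β (a * b) = β b * β a
  αβ_comm : ∀ a b : R, α a * β b = β b * α a
  Δ : H →ₗ[k] H ⊗[k] H
  ε : H →ₗ[k] R

namespace PreBialgebroid

variable {k H R : Type} [Field k] [Ring H] [Algebra k H] [Ring R] [Algebra k R]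
variable (D : PreBialgebroid k H R)

/-- The submodule of `H ⊗[k] H` by which one divides to obtain `H ⊗_R H`. -/
def rel2 : Submodule k (H ⊗[k] H) :=
  Submodule.span k {z | ∃ (r : R) (x y : H), z = (D.β r * x) ⊗ₜ[k] y - x ⊗ₜ[k] (D.α r * y)}

/-- The projection `H ⊗[k] H → H ⊗_R H`. -/
def π2 : H ⊗[k] H →ₗ[k] (H ⊗[k] H) ⧸ D.rel2 := D.rel2.mkQ

/-- Relations for the triple tensor product `H ⊗_R H ⊗_R H` (right associated). -/
def rel3 : Submodule k (H ⊗[k] (H ⊗[k] H)) :=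
  Submodule.span k {z |
    (∃ (r : R) (x y w : H), z = (D.β r * x) ⊗ₜ[k] (y ⊗ₜ[k] w) - x ⊗ₜ[k] ((D.α r * y) ⊗ₜ[k] w)) ∨
    (∃ (r : R) (x y w : H), z = x ⊗ₜ[k] ((D.β r * y) ⊗ₜ[k] w) - x ⊗ₜ[k] (y ⊗ₜ[k] (D.α r * w)))}

def π3 : H ⊗[k] (H ⊗[k] H) →ₗ[k] (H ⊗[k] (H ⊗[k] H)) ⧸ D.rel3 := D.rel3.mkQ

/-- For a linear map `f : H → H`, the map `x ⊗ y ↦ f x * y`. -/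
def mulL (f : H →ₗ[k] H) : H ⊗[k] H →ₗ[k] H :=
  TensorProduct.lift
    (LinearMap.mk₂ k (fun x y => f x * y)
      (by intro x x' y; simp [map_add, add_mul])
      (by intro c x y; simp [map_smul, smul_mul_assoc])
      (by intro x y y'; simp [mul_add])
      (by intro c x y; simp [mul_smul_comm]))

/-- For a linear map `f : H → H`, the map `x ⊗ y ↦ f y * x`. -/
def mulR (f : H →ₗ[k] H) : H ⊗[k] H →ₗ[k] H :=
  TensorProduct.lift
    (LinearMap.mk₂ k (fun x y => f y * x)
      (by intro x x' y; simp [mul_add])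
      (by intro c x y; simp [mul_smul_comm])
      (by intro x y y'; simp [map_add, add_mul])
      (by intro c x y; simp [map_smul, smul_mul_assoc]))

/-- The (lift of the) Connes–Moscovici cyclic operator in degree 2:
`x ⊗ y ↦ Δ(T x) · (y ⊗ 1)`. -/
def tau2 (T : H →ₗ[k] H) : H ⊗[k] H →ₗ[k] H ⊗[k] H :=
  TensorProduct.lift
    (LinearMap.mk₂ k (fun x y => D.Δ (T x) * (y ⊗ₜ[k] (1 : H)))
      (by intro x x' y; simp [map_add, add_mul])
      (by intro c x y; simp [map_smul, smul_mul_assoc])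
      (by intro x y y'; simp [add_tmul, mul_add])
      (by intro c x y; simp [← TensorProduct.smul_tmul', mul_smul_comm]))

/-- The bialgebroid axioms, stated for the chosen linear lift `Δ` of the coproduct
modulo the relations defining `H ⊗_R H`. -/
structure IsBialgebroid : Prop where
  Δ_one : D.π2 (D.Δ 1) = D.π2 ((1 : H) ⊗ₜ[k] (1 : H))
  coassoc : ∀ h : H,
    D.π3 ((TensorProduct.assoc k H H H) ((D.Δ.rTensor H) (D.Δ h))) =
      D.π3 ((D.Δ.lTensor H) (D.Δ h))
  Δ_cp3 : ∀ (h : H) (r : R),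
    D.π2 (D.Δ h * (D.β r ⊗ₜ[k] (1 : H) - (1 : H) ⊗ₜ[k] D.α r)) = 0
  Δ_mul : ∀ a b : H, D.π2 (D.Δ (a * b)) = D.π2 (D.Δ a * D.Δ b)
  Δ_left : ∀ (r : R) (h : H),
    D.π2 (D.Δ (D.α r * h)) = D.π2 ((D.α r ⊗ₜ[k] (1 : H)) * D.Δ h)
  Δ_right : ∀ (r : R) (h : H),
    D.π2 (D.Δ (D.β r * h)) = D.π2 (((1 : H) ⊗ₜ[k] D.β r) * D.Δ h)
  ε_one : D.ε 1 = 1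
  ε_left : ∀ (r : R) (h : H), D.ε (D.α r * h) = r * D.ε h
  ε_right : ∀ (r : R) (h : H), D.ε (D.β r * h) = D.ε h * r
  counit_l : ∀ h : H, mulL (D.α.toLinearMap ∘ₗ D.ε) (D.Δ h) = h
  counit_r : ∀ h : H, mulR (D.β ∘ₗ D.ε) (D.Δ h) = h

/-- The para-Hopf algebroid axioms for a para-antipode `T`. -/
structure IsParaHopf (T : H →ₗ[k] H) : Prop where
  bialgebroid : D.IsBialgebroid
  T_one : T 1 = 1
  T_antimul : ∀ a b : H, T (a * b) = T b * T a
  PH1 : ∀ r : R, T (D.β r) = D.α r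
  PH2 : ∀ h : H, mulL T (D.Δ h) = D.β (D.ε (T h))
  T_invol : ∀ h : H, T (T h) = h
  PH3 : ∀ h : H, D.π2 (tau2 D T (D.Δ h)) = D.π2 ((1 : H) ⊗ₜ[k] T h)

end PreBialgebroid

open Coalgebra in
/-- The convolution `δ * S` for a character `δ`. -/
def twistedAntipode {k 𝓗 : Type} [Field k] [Ring 𝓗] [HopfAlgebra k 𝓗]
    (δ : 𝓗 →ₐ[k] k) : 𝓗 →ₗ[k] 𝓗 :=
  (TensorProduct.lift
    (LinearMap.mk₂ k (fun x y => δ x • HopfAlgebra.antipode (R := k) y)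
      (by intro x x' y; simp [map_add, add_smul])
      (by intro c x y; simp [mul_smul])
      (by intro x y y'; simp [map_add, smul_add])
      (by intro c x y; simp only [map_smul]; rw [smul_comm]))) ∘ₗ comul


namespace PHaux
open Coalgebra MulOpposite WithConv HopfAlgebra PreBialgebroid

section hopf
variable {k 𝓗 : Type} [Field k] [Ring 𝓗] [HopfAlgebra k 𝓗] (δ : 𝓗 →ₐ[k] k)

/-- character as a linear map into 𝓗 -/
def cδ : 𝓗 →ₗ[k] 𝓗 := Algebra.linearMap k 𝓗 ∘ₗ δ.toLinearMap

lemma tw_conv : toConv (twistedAntipode δ) = toConv (cδ δ) * toConv (antipode k (A := 𝓗)) := by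
  ext h
  simp only [LinearMap.convMul_apply, twistedAntipode]
  change TensorProduct.lift _ (comul h) = _
  induction comul (R := k) h using TensorProduct.induction_on with
  | zero => simp
  | tmul x y => simp [cδ, Algebra.smul_def]
  | add x y hx hy => rw [map_add, hx, hy]; simp

lemma tw_conv_id : toConv (twistedAntipode δ) * toConv LinearMap.id = toConv (cδ δ) := by
  rw [tw_conv, mul_assoc, LinearMap.antipode_mul_id, mul_one]

lemma tw_mul_id (h : 𝓗) : mulL (twistedAntipode δ) (comul (R := k) h) = algebraMap k 𝓗 (δ h) := by
  have := congr($(tw_conv_id δ).ofConv h)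
  change LinearMap.mul' k 𝓗 (TensorProduct.map _ _ (comul h)) = algebraMap k 𝓗 (δ h) at this
  rw [← this]
  induction comul (R := k) h using TensorProduct.induction_on with
  | zero => simp
  | tmul x y => simp [mulL]
  | add x y hx hy => rw [map_add, hx, hy]; simp

lemma tw_one : twistedAntipode δ (1 : 𝓗) = 1 := by
  simp [twistedAntipode, Algebra.TensorProduct.one_def]

lemma tw_mul (g h : 𝓗) : twistedAntipode δ (g * h) = twistedAntipode δ h * twistedAntipode δ g := by
  simp only [twistedAntipode, LinearMap.comp_apply, Bialgebra.comul_mul]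
  induction comul (R := k) g using TensorProduct.induction_on with
  | zero => simp
  | add x y hx hy => rw [add_mul, map_add, hx, hy, map_add, mul_add]
  | tmul x y =>
    induction comul (R := k) h using TensorProduct.induction_on with
    | zero => simp
    | add x y hx hy => rw [mul_add, map_add, hx, hy, map_add, add_mul]
    | tmul z w => simp [antipode_mul_antidistrib, smul_smul, mul_comm]

lemma counit_tw (h : 𝓗) : counit (R := k) (twistedAntipode δ h) = δ h := by
  have h1 : δ h = δ (TensorProduct.rid k 𝓗 ((counit (R := k)).lTensor 𝓗 (comul h))) := by simp
  rw [h1]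
  simp only [twistedAntipode, LinearMap.comp_apply]
  induction comul (R := k) h using TensorProduct.induction_on with
  | zero => simp
  | add x y hx hy => simp only [map_add, hx, hy]
  | tmul z w => simp [mul_comm]

/-- left inclusion -/
def I1 : 𝓗 →ₐ[k] 𝓗 ⊗[k] 𝓗 := Algebra.TensorProduct.includeLeft
/-- right inclusion -/
def I2 : 𝓗 →ₐ[k] 𝓗 ⊗[k] 𝓗 := Algebra.TensorProduct.includeRight

lemma comul_conv : toConv (comul (R := k) (A := 𝓗)) =
    toConv (I1 (k := k)).toLinearMap * toConv (I2 (k := k)).toLinearMap := by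
  ext h
  rw [LinearMap.convMul_apply]
  change comul h = _
  simp only [ofConv_toConv]
  induction comul (R := k) h using TensorProduct.induction_on with
  | zero => simp
  | add x y hx hy => simp only [map_add, ← hx, ← hy]
  | tmul z w => simp [I1, I2]

lemma push {A B C : Type} [Ring A] [Ring B] [Algebra k A] [Algebra k B] [AddCommGroup C] [Module k C]
    [Coalgebra k C] (φ : A →ₐ[k] B) (f g : C →ₗ[k] A) :
    toConv (φ.toLinearMap ∘ₗ (toConv f * toConv g).ofConv) =
      toConv (φ.toLinearMap ∘ₗ f) * toConv (φ.toLinearMap ∘ₗ g) :=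
  congrArg toConv (LinearMap.algHom_comp_convMul_distrib φ (toConv f) (toConv g))

lemma push_one {A B C : Type} [Ring A] [Ring B] [Algebra k A] [Algebra k B] [AddCommGroup C]
    [Module k C] [Coalgebra k C] (φ : A →ₐ[k] B) :
    toConv (φ.toLinearMap ∘ₗ (1 : WithConv (C →ₗ[k] A)).ofConv) = 1 := by
  ext; simp [LinearMap.convOne_def]

lemma key : toConv (comul (R := k) ∘ₗ antipode k (A := 𝓗)) * toConv (I1 (k := k)).toLinearMap =
    toConv ((I2 (k := k)).toLinearMap ∘ₗ antipode k (A := 𝓗)) := by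
  apply left_inv_eq_right_inv (a := toConv (I2 (k := k)).toLinearMap)
  · rw [mul_assoc, ← comul_conv]
    have := push (Bialgebra.comulAlgHom k 𝓗) (antipode k (A := 𝓗)) LinearMap.id
    rw [LinearMap.antipode_mul_id, push_one] at this
    exact this.symm
  · have := push (I2 (k := k) (𝓗 := 𝓗)) LinearMap.id (antipode k (A := 𝓗))
    rw [LinearMap.id_mul_antipode, push_one] at this
    exact this.symm

lemma key2 : toConv (comul (R := k) ∘ₗ twistedAntipode δ) * toConv (I1 (k := k)).toLinearMap =
    toConv ((I2 (k := k)).toLinearMap ∘ₗ twistedAntipode δ) := by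
  have h1 := push (Bialgebra.comulAlgHom k 𝓗) (cδ δ) (antipode k (A := 𝓗))
  have h2 := push (I2 (k := k) (𝓗 := 𝓗)) (cδ δ) (antipode k (A := 𝓗))
  rw [← tw_conv] at h1 h2
  have h3 : (Bialgebra.comulAlgHom k 𝓗).toLinearMap ∘ₗ cδ δ =
    (I2 (k := k) (𝓗 := 𝓗)).toLinearMap ∘ₗ cδ δ := by
    ext x; simp [cδ]
  rw [h3] at h1
  refine (congrArg (· * _) h1).trans ?_
  refine Eq.trans ?_ h2.symm
  rw [mul_assoc]
  exact congrArg _ key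

/-- x ⊗ y ↦ Δ(S̃ x)(y ⊗ 1) -/
def tauH : 𝓗 ⊗[k] 𝓗 →ₗ[k] 𝓗 ⊗[k] 𝓗 :=
  LinearMap.mul' k (𝓗 ⊗[k] 𝓗) ∘ₗ
    TensorProduct.map (comul (R := k) ∘ₗ twistedAntipode δ) (I1 (k := k)).toLinearMap

lemma tauH_comul (h : 𝓗) : tauH δ (comul (R := k) h) = 1 ⊗ₜ twistedAntipode δ h :=
  congr($(key2 δ).ofConv h)

end hopf

section main
variable {k R 𝓗 : Type} [Field k] [Ring R] [Algebra k R] [Ring 𝓗] [HopfAlgebra k 𝓗]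
  (δ : 𝓗 →ₐ[k] k)

variable (k R 𝓗) in
/-- the total algebra -/
def HH : Type := R ⊗[k] (𝓗 ⊗[k] Rᵐᵒᵖ)

instance : Ring (HH k R 𝓗) := inferInstanceAs (Ring (R ⊗[k] (𝓗 ⊗[k] Rᵐᵒᵖ)))
instance : Algebra k (HH k R 𝓗) := inferInstanceAs (Algebra k (R ⊗[k] (𝓗 ⊗[k] Rᵐᵒᵖ)))

variable (k 𝓗) in
/-- linear version, raw -/
def inn0 (a : R) (b : Rᵐᵒᵖ) : 𝓗 →ₗ[k] R ⊗[k] (𝓗 ⊗[k] Rᵐᵒᵖ) :=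
  (TensorProduct.mk k R _ a) ∘ₗ ((TensorProduct.mk k 𝓗 Rᵐᵒᵖ).flip b)

variable (k 𝓗) in
/-- `x ↦ a ⊗ x ⊗ b` -/
def inn (a : R) (b : Rᵐᵒᵖ) : 𝓗 →ₗ[k] HH k R 𝓗 := inn0 k 𝓗 a b

variable (k) in
/-- pure tensors -/
def tt (a : R) (h : 𝓗) (b : Rᵐᵒᵖ) : HH k R 𝓗 := inn k 𝓗 a b h

@[simp] lemma inn_apply (a : R) (b : Rᵐᵒᵖ) (x : 𝓗) : inn k 𝓗 a b x = tt k a x b := rfl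

lemma tt_def (a : R) (b : Rᵐᵒᵖ) (x : 𝓗) : tt k a x b = a ⊗ₜ[k] (x ⊗ₜ[k] b) := rfl

@[simp] lemma tt_mul (a a' : R) (h h' : 𝓗) (b b' : Rᵐᵒᵖ) :
    tt k a h b * tt k a' h' b' = tt k (a * a') (h * h') (b * b') := by
  refine (Algebra.TensorProduct.tmul_mul_tmul (R := k) a a' (h ⊗ₜ[k] b) (h' ⊗ₜ[k] b')).trans ?_
  rw [Algebra.TensorProduct.tmul_mul_tmul]; rfl

@[simp] lemma tt_zero (a : R) (b : Rᵐᵒᵖ) : tt k a (0 : 𝓗) b = 0 := map_zero (inn k 𝓗 a b)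

@[simp] lemma tt_smul (a : R) (h : 𝓗) (b : Rᵐᵒᵖ) (c : k) :
    tt k a (c • h) b = c • tt k a h b := map_smul (inn k 𝓗 a b) c h

@[simp] lemma tt_smull (a : R) (h : 𝓗) (b : Rᵐᵒᵖ) (c : k) :
    tt k (c • a) h b = c • tt k a h b := rfl

@[simp] lemma tt_smulr (a : R) (h : 𝓗) (b : Rᵐᵒᵖ) (c : k) :
    tt k a h (c • b) = c • tt k a h b := by
  rw [← tt_smul]; simp only [tt_def, tmul_smul, smul_tmul]; rfl

lemma one_tt : (1 : HH k R 𝓗) = tt k 1 1 1 := rfl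

lemma HH_ind {P : HH k R 𝓗 → Prop} (h0 : P 0) (hadd : ∀ x y, P x → P y → P (x + y))
    (H : ∀ a h b, P (tt k a h b)) (x : HH k R 𝓗) : P x := by
  refine TensorProduct.induction_on (motive := P) x h0 ?_ hadd
  intro a y
  refine TensorProduct.induction_on (motive := fun y => P (a ⊗ₜ[k] y)) y ?_ (H a) ?_
  · rw [tmul_zero]; exact h0
  · intro x y hx hy
    rw [tmul_add]; exact hadd _ _ hx hy

variable (k 𝓗) in
/-- `x ⊗ y ↦ (a ⊗ x ⊗ 1) ⊗ (1 ⊗ y ⊗ b)` -/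
def EE (a : R) (b : Rᵐᵒᵖ) : 𝓗 ⊗[k] 𝓗 →ₗ[k] HH k R 𝓗 ⊗[k] HH k R 𝓗 :=
  TensorProduct.map (inn k 𝓗 a 1) (inn k 𝓗 1 b)

@[simp] lemma EE_tmul (a : R) (b : Rᵐᵒᵖ) (x y : 𝓗) :
    EE k 𝓗 a b (x ⊗ₜ y) = tt k a x 1 ⊗ₜ[k] tt k 1 y b := rfl

lemma EE_mul (a a' : R) (b b' : Rᵐᵒᵖ) (s t : 𝓗 ⊗[k] 𝓗) :
    EE k 𝓗 a b s * EE k 𝓗 a' b' t = EE k 𝓗 (a * a') (b * b') (s * t) := by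
  induction s using TensorProduct.induction_on with
  | zero => simp
  | add x y hx hy => simp only [add_mul, map_add, hx, hy]
  | tmul x y =>
    induction t using TensorProduct.induction_on with
    | zero => simp
    | add x y hx hy => simp only [mul_add, map_add, hx, hy]
    | tmul z w => simp

variable (k R 𝓗) in
/-- embedding of 𝓗 -/
def jj : 𝓗 →ₐ[k] HH k R 𝓗 :=
  (Algebra.TensorProduct.includeRight : (𝓗 ⊗[k] Rᵐᵒᵖ) →ₐ[k] R ⊗[k] (𝓗 ⊗[k] Rᵐᵒᵖ)).comp
    (Algebra.TensorProduct.includeLeft : 𝓗 →ₐ[k] 𝓗 ⊗[k] Rᵐᵒᵖ)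

variable (k R 𝓗) in
/-- embedding of R -/
def jl : R →ₐ[k] HH k R 𝓗 :=
  (Algebra.TensorProduct.includeLeft : R →ₐ[k] R ⊗[k] (𝓗 ⊗[k] Rᵐᵒᵖ))

variable (k R 𝓗) in
/-- embedding of Rop -/
def jr : Rᵐᵒᵖ →ₐ[k] HH k R 𝓗 :=
  ((Algebra.TensorProduct.includeRight : (𝓗 ⊗[k] Rᵐᵒᵖ) →ₐ[k] R ⊗[k] (𝓗 ⊗[k] Rᵐᵒᵖ)).comp
    (Algebra.TensorProduct.includeRight : Rᵐᵒᵖ →ₐ[k] 𝓗 ⊗[k] Rᵐᵒᵖ))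

lemma jj_apply (h : 𝓗) : jj k R 𝓗 h = tt k 1 h 1 := rfl

variable (k R 𝓗) in
/-- first leg -/
def f1 : R →ₐ[k] HH k R 𝓗 ⊗[k] HH k R 𝓗 :=
  (Algebra.TensorProduct.includeLeft : HH k R 𝓗 →ₐ[k] HH k R 𝓗 ⊗[k] HH k R 𝓗).comp (jl k R 𝓗)

variable (k R 𝓗) in
/-- second leg -/
def f2 : 𝓗 →ₐ[k] HH k R 𝓗 ⊗[k] HH k R 𝓗 :=
  (Algebra.TensorProduct.map (jj k R 𝓗) (jj k R 𝓗)).comp (Bialgebra.comulAlgHom k 𝓗)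

variable (k R 𝓗) in
/-- third leg -/
def f3 : Rᵐᵒᵖ →ₐ[k] HH k R 𝓗 ⊗[k] HH k R 𝓗 :=
  (Algebra.TensorProduct.includeRight : HH k R 𝓗 →ₐ[k] HH k R 𝓗 ⊗[k] HH k R 𝓗).comp (jr k R 𝓗)

lemma f1_eq (a : R) : f1 k R 𝓗 a = EE k 𝓗 a 1 1 := rfl
lemma f3_eq (b : Rᵐᵒᵖ) : f3 k R 𝓗 b = EE k 𝓗 1 b 1 := rfl
lemma f2_eq (h : 𝓗) : f2 k R 𝓗 h = EE k 𝓗 1 1 (comul (R := k) h) := by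
  change Algebra.TensorProduct.map (jj k R 𝓗) (jj k R 𝓗) (comul h) = _
  induction comul (R := k) h using TensorProduct.induction_on with
  | zero => simp
  | add x y hx hy => simp only [map_add, hx, hy]
  | tmul z w => simp [jj_apply]

variable (k R 𝓗) in
/-- the coproduct as an algebra map, raw -/
def DA0 : R ⊗[k] (𝓗 ⊗[k] Rᵐᵒᵖ) →ₐ[k] HH k R 𝓗 ⊗[k] HH k R 𝓗 :=
  Algebra.TensorProduct.lift (f1 k R 𝓗)
    (Algebra.TensorProduct.lift (f2 k R 𝓗) (f3 k R 𝓗)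
      (by intro x y; rw [f2_eq, f3_eq]; simp [Commute, SemiconjBy, EE_mul]))
    (by
      intro x y
      induction y using TensorProduct.induction_on with
      | zero => simp
      | add x y hx hy => rw [map_add]; exact hx.add_right hy
      | tmul z w => simp [Commute, SemiconjBy, EE_mul, f2_eq, f1_eq, f3_eq])

variable (k R 𝓗) in
/-- the coproduct as an algebra map -/
def DA : HH k R 𝓗 →ₐ[k] HH k R 𝓗 ⊗[k] HH k R 𝓗 := DA0 k R 𝓗

lemma DA_tmul (a : R) (h : 𝓗) (b : Rᵐᵒᵖ) :
    DA k R 𝓗 (tt k a h b) = EE k 𝓗 a b (comul (R := k) h) := by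
  change DA0 k R 𝓗 (a ⊗ₜ (h ⊗ₜ b)) = _
  simp [DA0, EE_mul, f2_eq, f1_eq, f3_eq]

variable (k R 𝓗) in
/-- counit, raw -/
def eps0 : R ⊗[k] (𝓗 ⊗[k] Rᵐᵒᵖ) →ₗ[k] R :=
  LinearMap.mul' k R ∘ₗ TensorProduct.map LinearMap.id
    ((TensorProduct.lid k R).toLinearMap ∘ₗ
      TensorProduct.map (counit (R := k)) (opLinearEquiv k (M := R)).symm.toLinearMap)

variable (k R 𝓗) in
/-- counit -/
def eps : HH k R 𝓗 →ₗ[k] R := eps0 k R 𝓗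

@[simp] lemma eps_tmul (a : R) (h : 𝓗) (b : Rᵐᵒᵖ) :
    eps k R 𝓗 (tt k a h b) = counit (R := k) h • (a * unop b) := by
  change eps0 k R 𝓗 (a ⊗ₜ (h ⊗ₜ b)) = _
  simp [eps0]

variable (R) in
/-- para-antipode, raw -/
def TT0 : R ⊗[k] (𝓗 ⊗[k] Rᵐᵒᵖ) →ₗ[k] R ⊗[k] (𝓗 ⊗[k] Rᵐᵒᵖ) :=
  (TensorProduct.assoc k R 𝓗 Rᵐᵒᵖ).toLinearMap ∘ₗ
  TensorProduct.map (TensorProduct.comm k 𝓗 R).toLinearMap LinearMap.id ∘ₗ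
  (TensorProduct.comm k Rᵐᵒᵖ (𝓗 ⊗[k] R)).toLinearMap ∘ₗ
  TensorProduct.map (opLinearEquiv k (M := R)).toLinearMap
    (TensorProduct.map (twistedAntipode δ) (opLinearEquiv k (M := R)).symm.toLinearMap)

variable (R) in
/-- para-antipode -/
def TT : HH k R 𝓗 →ₗ[k] HH k R 𝓗 := TT0 R δ

@[simp] lemma TT_tmul (a : R) (h : 𝓗) (b : Rᵐᵒᵖ) :
    TT R δ (tt k a h b) = tt k (unop b) (twistedAntipode δ h) (op a) := by
  change TT0 R δ (a ⊗ₜ (h ⊗ₜ b)) = _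
  simp [TT0, tt_def]

variable (k R 𝓗) in
/-- target map -/
def bet : R →ₗ[k] HH k R 𝓗 := (jr k R 𝓗).toLinearMap ∘ₗ (opLinearEquiv k (M := R)).toLinearMap

@[simp] lemma bet_apply (a : R) : bet k R 𝓗 a = tt k 1 1 (op a) := rfl

lemma jl_apply (a : R) : jl k R 𝓗 a = tt k a 1 1 := rfl

variable (k R 𝓗) in
/-- the data -/
def DD : PreBialgebroid k (HH k R 𝓗) R where
  α := jl k R 𝓗
  β := bet k R 𝓗
  β_one := rfl
  β_mul := by intro a b; simp
  αβ_comm := by intro a b; simp [jl_apply]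
  Δ := (DA k R 𝓗).toLinearMap
  ε := eps k R 𝓗

@[simp] lemma DD_α (a : R) : (DD k R 𝓗).α a = tt k a 1 1 := rfl
@[simp] lemma DD_β (a : R) : (DD k R 𝓗).β a = tt k 1 1 (op a) := rfl
lemma DD_Δ (x : HH k R 𝓗) : (DD k R 𝓗).Δ x = DA k R 𝓗 x := rfl
lemma DD_Δ' (a : R) (h : 𝓗) (b : Rᵐᵒᵖ) :
    (DD k R 𝓗).Δ (tt k a h b) = EE k 𝓗 a b (comul (R := k) h) := DA_tmul a h b
@[simp] lemma DD_ε : (DD k R 𝓗).ε = eps k R 𝓗 := rfl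

lemma rel_eq (D : PreBialgebroid k (HH k R 𝓗) R) (r : R) (x y : HH k R 𝓗) :
    D.π2 ((D.β r * x) ⊗ₜ[k] y) = D.π2 (x ⊗ₜ[k] (D.α r * y)) := by
  rw [← sub_eq_zero, ← map_sub]
  exact (Submodule.Quotient.mk_eq_zero _).2 (Submodule.subset_span ⟨r, x, y, rfl⟩)

lemma coass (a : R) (b : Rᵐᵒᵖ) (t : 𝓗 ⊗[k] 𝓗) :
    (TensorProduct.assoc k _ _ _) (((DD k R 𝓗).Δ.rTensor _) (EE k 𝓗 a b t)) =
    TensorProduct.map (inn k 𝓗 a 1) (TensorProduct.map (inn k 𝓗 1 1) (inn k 𝓗 1 b))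
      (TensorProduct.assoc k _ _ _ ((comul (R := k)).rTensor 𝓗 t)) := by
  induction t using TensorProduct.induction_on with
  | zero => simp
  | add x y hx hy => simp only [map_add, hx, hy]
  | tmul x y =>
    simp only [EE_tmul, LinearMap.rTensor_tmul, DD_Δ']
    induction comul (R := k) x using TensorProduct.induction_on with
    | zero => simp
    | add x y hx hy => simp only [map_add, add_tmul, hx, hy]
    | tmul x y => simp

lemma coass' (a : R) (b : Rᵐᵒᵖ) (t : 𝓗 ⊗[k] 𝓗) :
    (((DD k R 𝓗).Δ.lTensor _) (EE k 𝓗 a b t)) =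
    TensorProduct.map (inn k 𝓗 a 1) (TensorProduct.map (inn k 𝓗 1 1) (inn k 𝓗 1 b))
      ((comul (R := k)).lTensor 𝓗 t) := by
  induction t using TensorProduct.induction_on with
  | zero => simp
  | add x y hx hy => simp only [map_add, hx, hy]
  | tmul x y =>
    simp only [EE_tmul, LinearMap.lTensor_tmul, DD_Δ']
    induction comul (R := k) y using TensorProduct.induction_on with
    | zero => simp
    | add x y hx hy => simp only [map_add, tmul_add, hx, hy]
    | tmul x y => simp

lemma cp3 (a : R) (b : Rᵐᵒᵖ) (r : R) (t : 𝓗 ⊗[k] 𝓗) :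
    (DD k R 𝓗).π2 (EE k 𝓗 a b t * ((DD k R 𝓗).β r ⊗ₜ[k] 1 - 1 ⊗ₜ[k] (DD k R 𝓗).α r)) = 0 := by
  induction t using TensorProduct.induction_on with
  | zero => simp
  | add x y hx hy => simp only [map_add, add_mul, hx, hy, add_zero]
  | tmul x y =>
    have := rel_eq (DD k R 𝓗) r (tt k a x 1) (tt k 1 y b)
    rw [mul_sub, map_sub, sub_eq_zero]
    simpa [Algebra.TensorProduct.one_def, one_tt] using this

lemma mulL_tmul (f : HH k R 𝓗 →ₗ[k] HH k R 𝓗) (x y) : mulL f (x ⊗ₜ y) = f x * y := rfl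
lemma mulR_tmul (f : HH k R 𝓗 →ₗ[k] HH k R 𝓗) (x y) : mulR f (x ⊗ₜ y) = f y * x := rfl

lemma cl (a : R) (b : Rᵐᵒᵖ) (t : 𝓗 ⊗[k] 𝓗) :
    mulL ((DD k R 𝓗).α.toLinearMap ∘ₗ (DD k R 𝓗).ε) (EE k 𝓗 a b t) =
      inn k 𝓗 a b (TensorProduct.lid k 𝓗 ((counit (R := k)).rTensor 𝓗 t)) := by
  induction t using TensorProduct.induction_on with
  | zero => simp
  | add x y hx hy => simp only [map_add, hx, hy]
  | tmul x y => simp [mulL_tmul, smul_tmul']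

lemma cr (a : R) (b : Rᵐᵒᵖ) (t : 𝓗 ⊗[k] 𝓗) :
    mulR ((DD k R 𝓗).β ∘ₗ (DD k R 𝓗).ε) (EE k 𝓗 a b t) =
      inn k 𝓗 a b (TensorProduct.rid k 𝓗 ((counit (R := k)).lTensor 𝓗 t)) := by
  induction t using TensorProduct.induction_on with
  | zero => simp
  | add x y hx hy => simp only [map_add, hx, hy]
  | tmul x y => simp [mulR_tmul, smul_tmul']

lemma isBi : (DD k R 𝓗).IsBialgebroid where
  Δ_one := by rw [DD_Δ, map_one]; rfl
  coassoc := by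
    refine HH_ind (by simp) (fun x y hx hy => by simp only [map_add, hx, hy]) ?_
    intro a h b
    rw [DD_Δ', coass, coass', Coalgebra.coassoc_apply]
  Δ_cp3 := by
    intro h r
    revert h
    refine HH_ind (by simp) (fun x y hx hy => by rw [map_add, add_mul, map_add, hx, hy, add_zero]) ?_
    intro a h b
    rw [DD_Δ', cp3]
  Δ_mul := by intro a b; simp only [DD_Δ, map_mul]
  Δ_left := by
    intro r h
    simp only [DD_Δ, map_mul]
    rw [DD_α, DA_tmul]
    simp [Algebra.TensorProduct.one_def, one_tt]
  Δ_right := by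
    intro r h
    simp only [DD_Δ, map_mul]
    rw [DD_β, DA_tmul]
    simp [Algebra.TensorProduct.one_def, one_tt]
  ε_one := by simp [Algebra.TensorProduct.one_def, one_tt]
  ε_left := by
    intro r
    refine HH_ind (by simp) (fun x y hx hy => by simp only [map_add, mul_add, hx, hy]) ?_
    intro a h b
    simp [mul_assoc]
  ε_right := by
    intro r
    refine HH_ind (by simp) (fun x y hx hy => by simp only [map_add, mul_add, add_mul, hx, hy]) ?_
    intro a h b
    simp [mul_assoc]
  counit_l := by
    refine HH_ind (by simp) (fun x y hx hy => by simp only [map_add, hx, hy]) ?_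
    intro a h b
    rw [DD_Δ', cl]; simp
  counit_r := by
    refine HH_ind (by simp) (fun x y hx hy => by simp only [map_add, hx, hy]) ?_
    intro a h b
    rw [DD_Δ', cr]; simp

lemma ph2 (a : R) (b : Rᵐᵒᵖ) (t : 𝓗 ⊗[k] 𝓗) :
    mulL (TT R δ) (EE k 𝓗 a b t) = inn k 𝓗 1 (op a * b) (mulL (twistedAntipode δ) t) := by
  induction t using TensorProduct.induction_on with
  | zero => simp
  | add x y hx hy => simp only [map_add, hx, hy]
  | tmul x y => simp [mulL]

lemma ph3 (a : R) (b : Rᵐᵒᵖ) (t : 𝓗 ⊗[k] 𝓗) :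
    (DD k R 𝓗).π2 (tau2 (DD k R 𝓗) (TT R δ) (EE k 𝓗 a b t)) =
      (DD k R 𝓗).π2 (TensorProduct.map (inn k 𝓗 1 1) (inn k 𝓗 (unop b) (op a)) (tauH δ t)) := by
  induction t using TensorProduct.induction_on with
  | zero => simp
  | add x y hx hy => simp only [map_add, hx, hy]
  | tmul x y =>
    simp only [EE_tmul, tau2, TensorProduct.lift.tmul, LinearMap.mk₂_apply, TT_tmul, DD_Δ', tauH,
      LinearMap.comp_apply, TensorProduct.map_tmul]
    induction comul (R := k) (twistedAntipode δ x) using TensorProduct.induction_on with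
    | zero => simp
    | add x y hx hy => simp only [map_add, add_tmul, add_mul, hx, hy]
    | tmul z w =>
      have := rel_eq (DD k R 𝓗) (unop b) (tt k 1 (z * y) 1) (tt k 1 w (op a))
      simpa [I1, Algebra.TensorProduct.one_def, one_tt] using this

lemma isPH (hS2 : ∀ h : 𝓗, twistedAntipode δ (twistedAntipode δ h) = h) :
    (DD k R 𝓗).IsParaHopf (TT R δ) where
  bialgebroid := isBi
  T_one := by simp [Algebra.TensorProduct.one_def, one_tt, tw_one]
  T_antimul := by
    intro x y
    revert x
    refine HH_ind (by simp) (fun x y hx hy => by simp only [map_add, mul_add, add_mul, hx, hy]) ?_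
    intro a h b
    revert y
    refine HH_ind (by simp) (fun x y hx hy => by simp only [map_add, mul_add, add_mul, hx, hy]) ?_
    intro a' h' b'
    simp [tw_mul]
  PH1 := by intro r; simp [tw_one, Algebra.TensorProduct.one_def, one_tt]
  PH2 := by
    refine HH_ind (by simp only [map_zero]) (fun x y hx hy => by simp only [map_add, hx, hy]) ?_
    intro a h b
    rw [DD_Δ', ph2, tw_mul_id]
    simp [counit_tw, Algebra.algebraMap_eq_smul_one, smul_tmul']
  T_invol := by
    refine HH_ind (by simp) (fun x y hx hy => by simp only [map_add, hx, hy]) ?_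
    intro a h b
    simp [hS2]
  PH3 := by
    refine HH_ind (by simp) (fun x y hx hy => by simp only [map_add, tmul_add, hx, hy]) ?_
    intro a h b
    rw [DD_Δ', ph3, tauH_comul]
    simp [Algebra.TensorProduct.one_def, one_tt]

end main
end PHaux

open Coalgebra MulOpposite in
/-- for a Hopf algebra `𝓗` with character `δ` whose twisted antipode is
involutive, and any algebra `R`, the algebra `H = R ⊗ 𝓗 ⊗ Rᵒᵖ` is a para-Hopf algebroid
over `R` with the structure maps of Example 2.3. -/
theorem tensor_hopf_is_paraHopf
    {k R 𝓗 : Type} [Field k] [Ring R] [Algebra k R] [Ring 𝓗] [HopfAlgebra k 𝓗]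
    (δ : 𝓗 →ₐ[k] k)
    (hS2 : ∀ h : 𝓗, twistedAntipode δ (twistedAntipode δ h) = h) :
    ∃ (D : PreBialgebroid k (R ⊗[k] (𝓗 ⊗[k] Rᵐᵒᵖ)) R)
      (T : R ⊗[k] (𝓗 ⊗[k] Rᵐᵒᵖ) →ₗ[k] R ⊗[k] (𝓗 ⊗[k] Rᵐᵒᵖ)),
      D.IsParaHopf T ∧
      D.α = Algebra.TensorProduct.includeLeft ∧
      (∀ a : R, D.β a = (1 : R) ⊗ₜ[k] ((1 : 𝓗) ⊗ₜ[k] op a)) ∧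
      (∀ (a b : R) (h : 𝓗),
        D.π2 (D.Δ (a ⊗ₜ[k] (h ⊗ₜ[k] op b))) =
          D.π2 ((TensorProduct.lift
            (LinearMap.mk₂ k
              (fun x y => (a ⊗ₜ[k] (x ⊗ₜ[k] (op (1 : R)))) ⊗ₜ[k]
                ((1 : R) ⊗ₜ[k] (y ⊗ₜ[k] op b)))
              (by intros; simp [TensorProduct.add_tmul, TensorProduct.tmul_add])
              (by intros; simp [TensorProduct.smul_tmul, TensorProduct.tmul_smul])
              (by intros; simp [TensorProduct.add_tmul, TensorProduct.tmul_add])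
              (by intros; simp [TensorProduct.smul_tmul, TensorProduct.tmul_smul])))
            (comul (R := k) h))) ∧
      (∀ (a b : R) (h : 𝓗),
        D.ε (a ⊗ₜ[k] (h ⊗ₜ[k] op b)) = counit (R := k) h • (a * b)) ∧
      (∀ (a b : R) (h : 𝓗),
        T (a ⊗ₜ[k] (h ⊗ₜ[k] op b)) = b ⊗ₜ[k] (twistedAntipode δ h ⊗ₜ[k] op a)) := by
  refine ⟨PHaux.DD k R 𝓗, PHaux.TT R δ, PHaux.isPH δ hS2, rfl, fun a => rfl, ?_, ?_, ?_⟩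
  · intro a b h
    refine (congrArg (PHaux.DD k R 𝓗).π2 (PHaux.DD_Δ' a h (op b))).trans ?_
    refine congrArg (PHaux.DD k R 𝓗).π2 ?_
    induction comul (R := k) h using TensorProduct.induction_on with
    | zero => rw [map_zero, map_zero]; rfl
    | add x y hx hy => rw [map_add, map_add, hx, hy]; rfl
    | tmul z w => rfl
  · intro a b h
    exact PHaux.eps_tmul a h (op b)
  · intro a b h
    exact PHaux.TT_tmul δ a h (op b)
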